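/- Let X be a Grothendieck category with a localizing subcategory Y, quotient functor π : X → X/Y, and let Z₁, Z₂ be weakly closed subcategories of X. Then: (1) π(Z₁) ∪ π(Z₂) = π(Z₁ ∪ Z₂); (2) if Z₁ and Z₂ are Y-torsionfree generated, then so is Z₁ ∪ Z₂; (3) if X satisfies (AB4*) and Z₁, Z₂ are closed in X, then Z₁ ∪ Z₂ is closed in X, and if in addition Z₁ ∪ Z₂ is Y-essentially stable, then π(Z₁) ∪ π(Z₂) is closed in X/Y. -/

import Mathlib

open CategoryTheory CategoryTheory.Limits Opposite

universe v u

namespace Paper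

variable {C : Type u} [Category.{v} C]

/-- An object `M` is compact if `Hom(M, -)` commutes with arbitrary (small) direct sums. -/
def IsCompactObj (M : C) : Prop :=
  ∀ ι : Type v, Nonempty (PreservesColimitsOfShape (Discrete ι) (coyoneda.obj (op M)))

variable [Abelian C]

section
variable [HasColimits C]

/-- A full subcategory (given by its set of objects) is weakly closed if it is closed
under subobjects, quotient objects and arbitrary (small) direct sums. -/
structure IsWeaklyClosed (Z : Set C) : Prop where
  mem_of_mono : ∀ {A M : C} (f : A ⟶ M), Mono f → M ∈ Z → A ∈ Z
  mem_of_epi : ∀ {M B : C} (f : M ⟶ B), Epi f → M ∈ Z → B ∈ Z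
  sigma_mem : ∀ {ι : Type v} (f : ι → C), (∀ i, f i ∈ Z) → (∐ f) ∈ Z

/-- Closure under arbitrary (small) products. -/
def ClosedUnderProducts [HasLimits C] (Z : Set C) : Prop :=
  ∀ {ι : Type v} (f : ι → C), (∀ i, f i ∈ Z) → (∏ᶜ f) ∈ Z

/-- A closed subcategory: weakly closed and closed under products. -/
def IsClosedSub [HasLimits C] (Z : Set C) : Prop :=
  IsWeaklyClosed Z ∧ ClosedUnderProducts Z

/-- Closure under extensions. -/
def ClosedUnderExtensions (Y : Set C) : Prop :=
  ∀ S : ShortComplex C, S.ShortExact → S.X₁ ∈ Y → S.X₃ ∈ Y → S.X₂ ∈ Y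

/-- A localizing subcategory: weakly closed and closed under extensions. -/
def IsLocalizing (Y : Set C) : Prop :=
  IsWeaklyClosed Y ∧ ClosedUnderExtensions Y

/-- The full subcategory generated by a class of objects `G`: all quotient objects
of (small) direct sums of objects of `G`. -/
def generatedBy (G : Set C) : Set C :=
  { M | ∃ (ι : Type v) (f : ι → C), (∀ i, f i ∈ G) ∧ ∃ p : (∐ f) ⟶ M, Epi p }

end

/-- A filter of subobjects of an object: nonempty, upward closed, and closed under
finite intersections. -/
def IsFilterOn {O : C} (F : Set (Subobject O)) : Prop :=
  F.Nonempty ∧ (∀ {I J : Subobject O}, I ∈ F → I ≤ J → J ∈ F) ∧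
    ∀ {I J : Subobject O}, I ∈ F → J ∈ F → I ⊓ J ∈ F

/-- A principal filter consists of all subobjects containing a fixed one. -/
def IsPrincipalFilter {O : C} (F : Set (Subobject O)) : Prop :=
  ∃ I : Subobject O, F = { J | I ≤ J }

variable {A : Type v}

/-- A filter system in a family of objects. -/
def IsFilterSystem (O : A → C) (F : ∀ α, Set (Subobject (O α))) : Prop :=
  (∀ α, IsFilterOn (F α)) ∧
    ∀ (α β : A) (f : O α ⟶ O β), ∀ J ∈ F β, (Subobject.pullback f).obj J ∈ F α

/-- An ideal in a family of generators: a choice of subobject `I α ⊆ O α` for each `α`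
such that `f (I α) ⊆ I β` for every morphism `f : O α ⟶ O β`
(expressed as `I α ≤ f⁻¹ (I β)`). -/
def IsIdealIn (O : A → C) (I : ∀ α, Subobject (O α)) : Prop :=
  ∀ (α β : A) (f : O α ⟶ O β), I α ≤ (Subobject.pullback f).obj (I β)

/-- The quotient object `O/I` of `O` by a subobject `I`. -/
noncomputable def quotBy {O : C} (I : Subobject O) : C := cokernel I.arrow

/-- The weakly closed subcategory generated by the objects `O α / I`, `I ∈ F α`. -/
def wcOfFilterSystem [HasColimits C] (O : A → C) (F : ∀ α, Set (Subobject (O α))) : Set C :=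
  generatedBy { M | ∃ (α : A) (I : Subobject (O α)), I ∈ F α ∧ Nonempty (quotBy I ≅ M) }

/-- The filter system associated to a subcategory `Z`: `F α = {I | O α / I ∈ Z}`. -/
def filterOf (O : A → C) (Z : Set C) (α : A) : Set (Subobject (O α)) :=
  { I | quotBy I ∈ Z }

section QuotientCat

variable {D : Type u} [Category.{v} D]

/-- The image `π(Z)` of a subcategory, as a full subcategory of the target
(closed under isomorphism). -/
def imageSub (π : C ⥤ D) (Z : Set C) : Set D := { N | ∃ M ∈ Z, Nonempty (π.obj M ≅ N) }

/-- The preimage `π⁻¹(𝒵)` of a subcategory. -/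
def preimageSub (π : C ⥤ D) (Z : Set D) : Set C := { M | π.obj M ∈ Z }

/-- `M` is `Y`-torsionfree if it has no nonzero subobject belonging to `Y`. -/
def IsTorsionFree (Y : Set C) (M : C) : Prop :=
  ∀ (N : C) (f : N ⟶ M), Mono f → N ∈ Y → IsZero N

/-- `Z` is `Y`-essentially stable if `ωπ(M) ∈ Z` for all `M ∈ Z`. -/
def EssStable (π : C ⥤ D) (ω : D ⥤ C) (Z : Set C) : Prop :=
  ∀ M ∈ Z, ω.obj (π.obj M) ∈ Z

/-- `Z'`: the full subcategory generated by the `Y`-torsionfree objects of `Z`. -/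
def torsPart [HasColimits C] (Y Z : Set C) : Set C :=
  generatedBy { M | M ∈ Z ∧ IsTorsionFree Y M }

/-- `Z` is `Y`-torsionfree generated if every object of `Z` is a quotient of a direct sum
of `Y`-torsionfree objects of `Z`. -/
def TorsionfreeGenerated [HasColimits C] (Y Z : Set C) : Prop :=
  Z ⊆ torsPart Y Z

/-- `Z` is `Y`-weakly closed: weakly closed, `Y`-essentially stable
and `Y`-torsionfree generated. -/
def IsYWeaklyClosed [HasColimits C] (π : C ⥤ D) (ω : D ⥤ C) (Y Z : Set C) : Prop :=
  IsWeaklyClosed Z ∧ EssStable π ω Z ∧ TorsionfreeGenerated Y Z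

/-- `Z` is `Y`-closed: closed, `Y`-essentially stable and `Y`-torsionfree generated. -/
def IsYClosed [HasLimits C] [HasColimits C] (π : C ⥤ D) (ω : D ⥤ C) (Y Z : Set C) : Prop :=
  IsClosedSub Z ∧ EssStable π ω Z ∧ TorsionfreeGenerated Y Z

end QuotientCat

/-- The Gabriel product `Z * W`: all objects `P` fitting in a short exact sequence
`0 → M → P → N → 0` with `M ∈ W` and `N ∈ Z`. -/
def gabrielProd (Z W : Set C) : Set C :=
  { P | ∃ S : ShortComplex C, S.ShortExact ∧ S.X₁ ∈ W ∧ S.X₃ ∈ Z ∧ Nonempty (S.X₂ ≅ P) }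

/-- `Isat` is the `Y`-saturation of `I` inside `O`: the largest subobject `J ⊇ I`
with `J/I ∈ Y`; that is, `Isat/I = τ(O/I)`. -/
def IsSaturationOf (Y : Set C) {O : C} (I Isat : Subobject O) : Prop :=
  ∃ h : I ≤ Isat, cokernel (Subobject.ofLE I Isat h) ∈ Y ∧
    ∀ (J : Subobject O) (hJ : I ≤ J), cokernel (Subobject.ofLE I J hJ) ∈ Y → J ≤ Isat


/-- The subcategory generated by the objects `O α / I α` for an ideal `I`. -/
def wcOfIdeal [HasColimits C] (O : A → C) (I : ∀ α, Subobject (O α)) : Set C :=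
  generatedBy { M | ∃ α : A, Nonempty (quotBy (I α) ≅ M) }

/-- The union `Z₁ ∪ Z₂` of two weakly closed subcategories: explicitly, all
subquotients of objects `M ⊞ N` with `M ∈ Z₁` and `N ∈ Z₂`. -/
def unionWC (Z₁ Z₂ : Set C) : Set C :=
  { P | ∃ (M N Q : C) (i : Q ⟶ M ⊞ N) (p : Q ⟶ P), M ∈ Z₁ ∧ N ∈ Z₂ ∧ Mono i ∧ Epi p }

/-!
A subobject `m : Q ⟶ π M` is the image under `π` of the pullback of `ω m` along the unit
`M ⟶ ω π M`, and a quotient `π M ⟶ P` is the image under `π` of the image of the adjoint morphism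
`M ⟶ ω P`. So `π` lifts subquotients, and since it preserves biproducts it commutes with unions.

An object of `Z₁ ∪ Z₂` is a quotient of some `Q ⊆ M ⊞ N`. Covering `M` and `N` by direct sums of
torsionfree objects and pulling `Q` back along that cover keeps everything torsionfree, because
torsionfree objects are closed under subobjects and, by (AB5), under direct sums.

For closedness, `∏ (M j ⊞ N j)` embeds in `∏ M j ⊞ ∏ N j` and (AB4*) keeps products of
epimorphisms epimorphic. A product in `X/Y` is `π` of the product in `X` of the objects `ω (f j)`,
which lie in `Z₁ ∪ Z₂` when it is essentially stable.
-/

section Biproducts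

variable {E : Type*} [Category* E] [HasZeroMorphisms E] [HasBinaryBiproducts E] {ι : Type*}

lemma mono_sigmaDesc_biprodMap (M N : ι → E) [HasCoproduct M] [HasCoproduct N]
    [HasCoproduct fun j => M j ⊞ N j] :
    Mono (Sigma.desc fun j => biprod.map (Sigma.ι M j) (Sigma.ι N j)) := by
  let retraction : (∐ M) ⊞ (∐ N) ⟶ ∐ fun j => M j ⊞ N j :=
    biprod.desc (Limits.Sigma.map fun _ => biprod.inl) (Limits.Sigma.map fun _ => biprod.inr)
  refine mono_of_mono_fac (show _ ≫ retraction = 𝟙 _ from Sigma.hom_ext _ _ fun j => ?_)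
  ext <;> simp [retraction]

lemma mono_biprodLift_piMap (M N : ι → E) [HasProduct M] [HasProduct N]
    [HasProduct fun j => M j ⊞ N j] :
    Mono (biprod.lift (Limits.Pi.map fun j => (biprod.fst : M j ⊞ N j ⟶ M j))
      (Limits.Pi.map fun j => (biprod.snd : M j ⊞ N j ⟶ N j))) := by
  let retraction : (∏ᶜ M) ⊞ (∏ᶜ N) ⟶ ∏ᶜ fun j => M j ⊞ N j :=
    Pi.lift fun j => biprod.map (Pi.π M j) (Pi.π N j)
  refine mono_of_mono_fac (show _ ≫ retraction = 𝟙 _ from Pi.hom_ext _ _ fun j => ?_)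
  ext <;> simp [retraction]

end Biproducts

lemma epi_piMap {E : Type*} [Category* E] {ι : Type*} [HasLimitsOfShape (Discrete ι) E]
    [HasExactLimitsOfShape (Discrete ι) E]
    {M N : ι → E} (p : ∀ j, M j ⟶ N j) [∀ j, Epi (p j)] : Epi (Limits.Pi.map p) := by
  let α : Discrete.functor M ⟶ Discrete.functor N := Discrete.natTrans fun j => p j.as
  have : ∀ j, Epi (α.app j) := fun j => inferInstanceAs (Epi (p j.as))
  have : Epi α := NatTrans.epi_of_epi_app α
  exact inferInstanceAs (Epi (lim.map α))

open CoproductsFromFiniteFiltered in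
lemma eq_zero_of_forall_comp_sigmaπ_eq_zero {E : Type*} [Category* E] [Preadditive E]
    [HasPullbacks E] [HasFiniteCoproducts E] {ι : Type*} [DecidableEq ι]
    [HasColimitsOfShape (Finset (Discrete ι)) E] [HasExactColimitsOfShape (Finset (Discrete ι)) E]
    {f : ι → E} [HasCoproduct f] {T : E} (x : T ⟶ ∐ f) (hx : ∀ i, x ≫ Sigma.π f i = 0) :
    x = 0 := by
  have : IsConnected (Finset (Discrete ι)) := IsFiltered.isConnected _
  -- `proj F` fixes the subcoproduct over `F`, while `x ≫ proj F = 0`. As `∐ f` is the exact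
  -- filtered colimit of these subcoproducts, `x` vanishes once its pullbacks to them do.
  let incl (F : Finset (Discrete ι)) : (∐ fun k : F => f k.1.as) ⟶ ∐ f :=
    Sigma.desc fun k => Sigma.ι f k.1.as
  let proj (F : Finset (Discrete ι)) : ∐ f ⟶ ∐ f := ∑ k ∈ F, Sigma.π f k.as ≫ Sigma.ι f k.as
  have incl_proj (F : Finset (Discrete ι)) : incl F ≫ proj F = incl F := by
    refine Sigma.hom_ext _ _ fun k => ?_
    rw [Sigma.ι_desc_assoc, Sigma.ι_desc, Preadditive.comp_sum,
      Finset.sum_eq_single_of_mem k.1 k.2, Sigma.ι_π_eq_id_assoc]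
    intro l _ hl
    rw [Sigma.ι_π_of_ne_assoc f fun h => hl (Discrete.ext h.symm), zero_comp]
  have comp_proj (F : Finset (Discrete ι)) : x ≫ proj F = 0 := by
    simp [proj, Preadditive.comp_sum, reassoc_of% hx]
  suffices x ≫ 𝟙 _ = 0 by simpa only [Category.comp_id] using this
  refine (isColimitFiniteSubproductsCocone f).pullback_zero_ext fun F => ?_
  calc pullback.snd (incl F) x ≫ x ≫ 𝟙 _
      = pullback.fst (incl F) x ≫ incl F := by rw [Category.comp_id, pullback.condition]
    _ = (pullback.fst (incl F) x ≫ incl F) ≫ proj F := by rw [Category.assoc, incl_proj]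
    _ = 0 := by rw [pullback.condition, Category.assoc, comp_proj, comp_zero]

lemma IsTorsionFree.of_mono {E : Type u} [Category.{v} E] {Y : Set E} {M N : E}
    (hM : IsTorsionFree Y M) (f : N ⟶ M) [Mono f] : IsTorsionFree Y N :=
  fun K g _ hK => hM K (g ≫ f) (mono_comp g f) hK

section TorsionFree

variable [HasColimits C] {Y : Set C}

lemma isTorsionFree_iff_forall_hom_eq_zero (hY : IsWeaklyClosed Y) {M : C} :
    IsTorsionFree Y M ↔ ∀ T ∈ Y, ∀ g : T ⟶ M, g = 0 := by
  refine ⟨fun hM T hT g => ?_, fun h N f _ hN => ?_⟩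
  · have image_mem : Limits.image g ∈ Y := hY.mem_of_epi (factorThruImage g) inferInstance hT
    have image_isZero := hM _ (Limits.image.ι g) inferInstance image_mem
    rw [← Limits.image.fac g, image_isZero.eq_of_tgt (factorThruImage g) 0, zero_comp]
  · exact IsZero.of_mono_eq_zero f (h N hN f)

lemma IsTorsionFree.biprod (hY : IsWeaklyClosed Y) {M N : C} (hM : IsTorsionFree Y M)
    (hN : IsTorsionFree Y N) : IsTorsionFree Y (M ⊞ N) := by
  rw [isTorsionFree_iff_forall_hom_eq_zero hY] at hM hN ⊢
  intro T hT g
  ext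
  · simpa using hM T hT (g ≫ biprod.fst)
  · simpa using hN T hT (g ≫ biprod.snd)

lemma IsTorsionFree.sigma [AB5 C] (hY : IsWeaklyClosed Y) {ι : Type v} {f : ι → C}
    (hf : ∀ i, IsTorsionFree Y (f i)) : IsTorsionFree Y (∐ f) := by
  classical
  simp only [isTorsionFree_iff_forall_hom_eq_zero hY] at hf ⊢
  exact fun T hT g => eq_zero_of_forall_comp_sigmaπ_eq_zero g fun i => hf i T hT _

end TorsionFree

lemma mem_generatedBy_of_epi {E : Type u} [Category.{v} E] [HasColimits E] {G : Set E} {M P : E}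
    (hM : M ∈ G) (p : M ⟶ P) [Epi p] : P ∈ generatedBy G :=
  ⟨PUnit, fun _ => M, fun _ => hM, Sigma.desc fun _ => p,
    epi_of_epi_fac (Sigma.ι_desc (fun _ => p) PUnit.unit)⟩

section Union

lemma mem_unionWC_of_mono {Z₁ Z₂ : Set C} {M N Q : C} (hM : M ∈ Z₁) (hN : N ∈ Z₂)
    (i : Q ⟶ M ⊞ N) [Mono i] : Q ∈ unionWC Z₁ Z₂ :=
  ⟨M, N, Q, i, 𝟙 Q, hM, hN, inferInstance, inferInstance⟩

lemma isWeaklyClosed_unionWC [HasColimits C] [AB4 C] {Z₁ Z₂ : Set C}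
    (h₁ : IsWeaklyClosed Z₁) (h₂ : IsWeaklyClosed Z₂) : IsWeaklyClosed (unionWC Z₁ Z₂) where
  mem_of_mono := by
    rintro A P f _ ⟨M, N, Q, i, p, hM, hN, _, _⟩
    exact ⟨M, N, pullback p f, pullback.fst p f ≫ i, pullback.snd p f, hM, hN,
      mono_comp _ _, inferInstance⟩
  mem_of_epi := by
    rintro P B f _ ⟨M, N, Q, i, p, hM, hN, hi, _⟩
    exact ⟨M, N, Q, i, p ≫ f, hM, hN, hi, epi_comp _ _⟩
  sigma_mem f hf := by
    choose M N Q i p hM hN _ _ using hf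
    have := mono_sigmaDesc_biprodMap M N
    exact ⟨∐ M, ∐ N, ∐ Q,
      Limits.Sigma.map i ≫ Sigma.desc fun j => biprod.map (Sigma.ι M j) (Sigma.ι N j),
      Limits.Sigma.map p, h₁.sigma_mem M hM, h₂.sigma_mem N hN, mono_comp _ _, inferInstance⟩

lemma closedUnderProducts_unionWC [HasLimits C] [AB4Star C] {Z₁ Z₂ : Set C}
    (h₁ : ClosedUnderProducts Z₁) (h₂ : ClosedUnderProducts Z₂) :
    ClosedUnderProducts (unionWC Z₁ Z₂) := by
  intro ι f hf
  choose M N Q i p hM hN _ _ using hf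
  have := mono_biprodLift_piMap M N
  exact ⟨∏ᶜ M, ∏ᶜ N, ∏ᶜ Q,
    Limits.Pi.map i ≫
      biprod.lift (Limits.Pi.map fun j => biprod.fst) (Limits.Pi.map fun j => biprod.snd),
    Limits.Pi.map p, h₁ M hM, h₂ N hN, mono_comp _ _, epi_piMap p⟩

lemma torsionfreeGenerated_unionWC [HasColimits C] [AB5 C] {Y Z₁ Z₂ : Set C}
    (hY : IsWeaklyClosed Y) (hZ₁ : IsWeaklyClosed Z₁) (hZ₂ : IsWeaklyClosed Z₂)
    (h₁ : TorsionfreeGenerated Y Z₁) (h₂ : TorsionfreeGenerated Y Z₂) :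
    TorsionfreeGenerated Y (unionWC Z₁ Z₂) := by
  rintro P ⟨M, N, Q, i, p, hM, hN, _, _⟩
  obtain ⟨ι, f, hf, a, _⟩ := h₁ hM
  obtain ⟨κ, g, hg, b, _⟩ := h₂ hN
  let c : (∐ f) ⊞ (∐ g) ⟶ M ⊞ N := biprod.map a b
  have cover_mem : pullback c i ∈ unionWC Z₁ Z₂ :=
    mem_unionWC_of_mono (hZ₁.sigma_mem f fun j => (hf j).1) (hZ₂.sigma_mem g fun j => (hg j).1)
      (pullback.fst c i)
  have cover_isTorsionFree : IsTorsionFree Y (pullback c i) :=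
    ((IsTorsionFree.sigma hY fun j => (hf j).2).biprod hY
      (IsTorsionFree.sigma hY fun j => (hg j).2)).of_mono (pullback.fst c i)
  have : Epi (pullback.snd c i ≫ p) := epi_comp _ _
  exact mem_generatedBy_of_epi ⟨cover_mem, cover_isTorsionFree⟩ (pullback.snd c i ≫ p)

end Union

section Reflection

lemma exists_mono_obj_iso_of_mono {E F : Type*} [Category* E] [Category* F] [HasPullbacks E]
    {π : E ⥤ F} {ω : F ⥤ E} (adj : π ⊣ ω) [PreservesLimitsOfShape WalkingCospan π]
    [ω.Full] [ω.Faithful] {M : E} {Q : F} (m : Q ⟶ π.obj M) [Mono m] :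
    ∃ (Q₀ : E) (m₀ : Q₀ ⟶ M), Mono m₀ ∧ Nonempty (π.obj Q₀ ≅ Q) := by
  have : ω.PreservesMonomorphisms := ω.preservesMonomorphisms_of_adjunction adj
  have square := (IsPullback.of_hasPullback (ω.map m) (adj.unit.app M)).map π
  have : IsIso (π.map (pullback.fst (ω.map m) (adj.unit.app M))) := square.isIso_fst_of_isIso
  exact ⟨pullback (ω.map m) (adj.unit.app M), pullback.snd _ _, inferInstance,
    ⟨asIso (π.map (pullback.fst (ω.map m) (adj.unit.app M))) ≪≫ asIso (adj.counit.app Q)⟩⟩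

lemma exists_epi_obj_iso_of_epi {E F : Type*} [Category* E] [Abelian E] [Category* F] [Balanced F]
    {π : E ⥤ F} {ω : F ⥤ E} (adj : π ⊣ ω) [π.PreservesMonomorphisms] [ω.Full]
    {M : E} {P : F} (p : π.obj M ⟶ P) [Epi p] :
    ∃ (P₀ : E) (p₀ : M ⟶ P₀), Epi p₀ ∧ Nonempty (π.obj P₀ ≅ P) := by
  let g : M ⟶ ω.obj P := adj.unit.app M ≫ ω.map p
  let q : π.obj (Limits.image g) ⟶ P := π.map (Limits.image.ι g) ≫ adj.counit.app P
  have factor : π.map (factorThruImage g) ≫ q = p := by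
    rw [← Category.assoc, ← π.map_comp, Limits.image.fac]
    simp [g]
  have : Epi q := epi_of_epi_fac factor
  have : Mono q := mono_comp _ _
  have : IsIso q := isIso_of_mono_of_epi q
  exact ⟨Limits.image g, factorThruImage g, inferInstance, ⟨asIso q⟩⟩

lemma isWeaklyClosed_setOf_isZero_obj {E : Type u} [Category.{v} E] [HasColimits E] {F : Type*}
    [Category* F] [HasZeroMorphisms F] {π : E ⥤ F} [π.PreservesMonomorphisms]
    [π.PreservesEpimorphisms] [∀ ι : Type v, PreservesColimitsOfShape (Discrete ι) π] :
    IsWeaklyClosed {M | IsZero (π.obj M)} where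
  mem_of_mono f _ hM := hM.of_mono (π.map f)
  mem_of_epi f _ hM := hM.of_epi (π.map f)
  sigma_mem f hf := (IsZero.iff_id_eq_zero _).2
    ((isColimitOfHasCoproductOfPreservesColimit π f).hom_ext fun j => (hf j.as).eq_of_src _ _)

lemma closedUnderProducts_imageSub {E F : Type u} [Category.{v} E] [Category.{v} F]
    [HasColimits E] [HasLimits E] [HasLimits F] {π : E ⥤ F} {ω : F ⥤ E} (adj : π ⊣ ω)
    [ω.Full] [ω.Faithful] {Z : Set E} (hZ : IsClosedSub Z) (hs : EssStable π ω Z) :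
    ClosedUnderProducts (imageSub π Z) := by
  intro ι f hf
  have : PreservesLimits ω := adj.rightAdjoint_preservesLimits
  have section_mem (j : ι) : ω.obj (f j) ∈ Z := by
    obtain ⟨M, hM, ⟨e⟩⟩ := hf j
    exact hZ.1.mem_of_epi (ω.map e.hom) inferInstance (hs M hM)
  exact ⟨∏ᶜ fun j => ω.obj (f j), hZ.2 _ section_mem,
    ⟨π.mapIso (PreservesProduct.iso ω f).symm ≪≫ asIso (adj.counit.app (∏ᶜ f))⟩⟩

variable {D : Type u} [Category.{v} D] [Abelian D] {π : C ⥤ D} {ω : D ⥤ C}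

lemma imageSub_unionWC (adj : π ⊣ ω) [PreservesFiniteLimits π] [ω.Full] [ω.Faithful]
    (Z₁ Z₂ : Set C) :
    unionWC (imageSub π Z₁) (imageSub π Z₂) = imageSub π (unionWC Z₁ Z₂) := by
  have : π.PreservesEpimorphisms := π.preservesEpimorphisms_of_adjunction adj
  have : PreservesBinaryBiproducts π := preservesBinaryBiproducts_of_preservesBinaryProducts π
  ext P
  constructor
  · rintro ⟨M', N', Q, i, p, ⟨M, hM, ⟨eM⟩⟩, ⟨N, hN, ⟨eN⟩⟩, _, _⟩
    let e : M' ⊞ N' ≅ π.obj (M ⊞ N) := (biprod.mapIso eM eN).symm ≪≫ (π.mapBiprod M N).symm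
    obtain ⟨Q₀, i₀, hi₀, ⟨eQ⟩⟩ := exists_mono_obj_iso_of_mono adj (i ≫ e.hom)
    obtain ⟨P₀, p₀, hp₀, ⟨eP⟩⟩ := exists_epi_obj_iso_of_epi adj (eQ.hom ≫ p)
    exact ⟨P₀, ⟨M, N, Q₀, i₀, p₀, hM, hN, hi₀, hp₀⟩, ⟨eP⟩⟩
  · rintro ⟨P₀, ⟨M, N, Q, i, p, hM, hN, _, _⟩, ⟨e⟩⟩
    exact ⟨π.obj M, π.obj N, π.obj Q, π.map i ≫ (π.mapBiprod M N).hom, π.map p ≫ e.hom,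
      ⟨M, hM, ⟨Iso.refl _⟩⟩, ⟨N, hN, ⟨Iso.refl _⟩⟩, mono_comp _ _, epi_comp _ _⟩

lemma isWeaklyClosed_imageSub [HasColimits C] [HasColimits D] (adj : π ⊣ ω)
    [PreservesFiniteLimits π] [ω.Full] [ω.Faithful] {Z : Set C} (hZ : IsWeaklyClosed Z) :
    IsWeaklyClosed (imageSub π Z) where
  mem_of_mono := by
    rintro A M' f _ ⟨M, hM, ⟨e⟩⟩
    obtain ⟨A₀, f₀, hf₀, eA⟩ := exists_mono_obj_iso_of_mono adj (f ≫ e.inv)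
    exact ⟨A₀, hZ.mem_of_mono f₀ hf₀ hM, eA⟩
  mem_of_epi := by
    rintro M' B f _ ⟨M, hM, ⟨e⟩⟩
    obtain ⟨B₀, f₀, hf₀, eB⟩ := exists_epi_obj_iso_of_epi adj (e.hom ≫ f)
    exact ⟨B₀, hZ.mem_of_epi f₀ hf₀ hM, eB⟩
  sigma_mem f hf := by
    choose M hM e using hf
    have : PreservesColimits π := adj.leftAdjoint_preservesColimits
    exact ⟨∐ M, hZ.sigma_mem M hM,
      ⟨PreservesCoproduct.iso π M ≪≫ Sigma.mapIso fun j => (e j).some⟩⟩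

lemma isClosedSub_imageSub [HasColimits C] [HasLimits C] [HasColimits D] [HasLimits D]
    (adj : π ⊣ ω) [PreservesFiniteLimits π] [ω.Full] [ω.Faithful] {Z : Set C}
    (hZ : IsClosedSub Z) (hs : EssStable π ω Z) : IsClosedSub (imageSub π Z) :=
  ⟨isWeaklyClosed_imageSub adj hZ.1, closedUnderProducts_imageSub adj hZ hs⟩

end Reflection

theorem statement_19_general {X : Type u} [Category.{v} X] [Abelian X]
    [HasLimits X] [HasColimits X] [AB5 X]
    {D : Type u} [Category.{v} D] [Abelian D] [HasLimits D] [HasColimits D]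
    (Y : Set X) (π : X ⥤ D) (ω : D ⥤ X) (adj : π ⊣ ω) [PreservesFiniteLimits π]
    [ω.Full] [ω.Faithful]
    (hker : ∀ M : X, M ∈ Y ↔ IsZero (π.obj M))
    (Z₁ Z₂ : Set X) (hZ₁ : IsWeaklyClosed Z₁) (hZ₂ : IsWeaklyClosed Z₂) :
    (unionWC (imageSub π Z₁) (imageSub π Z₂) = imageSub π (unionWC Z₁ Z₂)) ∧
    (TorsionfreeGenerated Y Z₁ → TorsionfreeGenerated Y Z₂ →
      TorsionfreeGenerated Y (unionWC Z₁ Z₂)) ∧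
    (Nonempty (AB4Star X) → IsClosedSub Z₁ → IsClosedSub Z₂ →
      IsClosedSub (unionWC Z₁ Z₂) ∧
      (EssStable π ω (unionWC Z₁ Z₂) →
        IsClosedSub (unionWC (imageSub π Z₁) (imageSub π Z₂)))) := by
  have : HasFiniteBiproducts X := .of_hasFiniteProducts
  have : AB4 X := .of_AB5 X
  have : PreservesColimits π := adj.leftAdjoint_preservesColimits
  have hY : IsWeaklyClosed Y := Set.ext hker ▸ isWeaklyClosed_setOf_isZero_obj
  refine ⟨imageSub_unionWC adj Z₁ Z₂, torsionfreeGenerated_unionWC hY hZ₁ hZ₂, ?_⟩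
  rintro ⟨_⟩ h₁ h₂
  have hZ : IsClosedSub (unionWC Z₁ Z₂) :=
    ⟨isWeaklyClosed_unionWC hZ₁ hZ₂, closedUnderProducts_unionWC h₁.2 h₂.2⟩
  exact ⟨hZ, fun hs => imageSub_unionWC adj Z₁ Z₂ ▸ isClosedSub_imageSub adj hZ hs⟩

/-- For weakly closed `Z₁, Z₂` in `X`: (1) `π(Z₁) ∪ π(Z₂) = π(Z₁ ∪ Z₂)`;
(2) if `Z₁, Z₂` are `Y`-torsionfree generated, so is `Z₁ ∪ Z₂`; (3) if `X` satisfies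
(AB4*) and `Z₁, Z₂` are closed, then `Z₁ ∪ Z₂` is closed, and if moreover `Z₁ ∪ Z₂` is
`Y`-essentially stable, then `π(Z₁) ∪ π(Z₂)` is closed in `X/Y`. -/
theorem statement_19 {X : Type u} [Category.{v} X] [Abelian X]
    [HasLimits X] [HasColimits X] [HasFilteredColimits X] [AB5 X] [HasProducts X]
    (hgen : ∃ G : X, IsSeparator G)
    {D : Type u} [Category.{v} D] [Abelian D] [HasLimits D] [HasColimits D]
    (Y : Set X) (hYloc : IsLocalizing Y)
    (π : X ⥤ D) (ω : D ⥤ X) (adj : π ⊣ ω) [PreservesFiniteLimits π]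
    [ω.Full] [ω.Faithful]
    (hker : ∀ M : X, M ∈ Y ↔ IsZero (π.obj M))
    (Z₁ Z₂ : Set X) (hZ₁ : IsWeaklyClosed Z₁) (hZ₂ : IsWeaklyClosed Z₂) :
    (unionWC (imageSub π Z₁) (imageSub π Z₂) = imageSub π (unionWC Z₁ Z₂)) ∧
    (TorsionfreeGenerated Y Z₁ → TorsionfreeGenerated Y Z₂ →
      TorsionfreeGenerated Y (unionWC Z₁ Z₂)) ∧
    (Nonempty (AB4Star X) → IsClosedSub Z₁ → IsClosedSub Z₂ →
      IsClosedSub (unionWC Z₁ Z₂) ∧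
      (EssStable π ω (unionWC Z₁ Z₂) →
        IsClosedSub (unionWC (imageSub π Z₁) (imageSub π Z₂)))) :=
  statement_19_general Y π ω adj hker Z₁ Z₂ hZ₁ hZ₂

end Paper
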